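/- Let R be a poset function on a nonempty finite set V satisfying axioms (r) and (p), and let G_R be its underlying digraph. Then G_R is a rooted directed tree: a directed acyclic graph in which every vertex has at most one incoming edge and which contains a root vertex w from which there is a directed path to every other vertex. Moreover, R equals the all-paths transit function of G_R. -/

import Mathlib

/-- A directed path from `u` to `v` w.r.t. the edge relation `E`: a nonempty list of
pairwise distinct vertices starting at `u`, ending at `v`, with every consecutive pair
an edge. -/
def IsDiPath {V : Type*} (E : V → V → Prop) (u v : V) (p : List V) : Prop :=
  p.Chain' E ∧ p.Nodup ∧ p.head? = some u ∧ p.getLast? = some v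

/-- The edge relation of the underlying digraph `G_R` of `R`. -/
def underlyingEdge {V : Type*} (R : V → V → Set V) (x y : V) : Prop :=
  x ≠ y ∧ R x y = {x, y}

/-- The all-paths transit function of the digraph with edge relation `E`. -/
def allPaths {V : Type*} (E : V → V → Prop) (u v : V) : Set V :=
  {x : V | ∃ p : List V, IsDiPath E u v p ∧ x ∈ p}

/-!
A poset function is the interval function of the partial order `u ≤ v ↔ R u v ≠ ∅`, so its
underlying digraph is the cover relation. Axiom (r) says that the order is codirected, so a minimal
element is a least element, and this is the root. Given `x, y ≤ v`, choose a common lower bound `z`;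
by (p) the interval `[z, v]` is `[z, x] ∪ [x, v]`, so `y` is comparable to `x`. Thus every principal
lower set is a chain, which leaves each vertex at most one lower cover. If principal lower sets are
finite, the order is the reflexive transitive closure of its cover relation, so the directed paths
from `u` to `v` fill out `[u, v]`.
-/

open Relation

section Digraph

variable {V : Type*} {E : V → V → Prop} {u v x : V} {p : List V}

/-- Rooted directed trees, given by their edge relation: acyclic digraphs with in-degrees at most
one and a root from which every other vertex is reached by a directed path. Acyclicity says that no
directed path is closed up by an edge, which for the one-vertex path excludes loops. -/
structure IsRootedDirectedTree (E : V → V → Prop) : Prop where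
  acyclic : ∀ u v p, IsDiPath E u v p → ¬ E v u
  eq_of_edge_of_edge : ∀ v x y, E x v → E y v → x = y
  exists_root : ∃ w, ∀ v, v ≠ w → ∃ p, IsDiPath E w v p

theorem IsDiPath.reflTransGen_left (hp : IsDiPath E u v p) (hx : x ∈ p) : ReflTransGen E u x := by
  obtain ⟨hchain, -, hhead, -⟩ := hp
  refine List.IsChain.induction (ReflTransGen E u) p hchain (fun _ _ hE h ↦ h.tail hE)
    (fun hne ↦ ?_) x hx
  rw [List.head_of_head?_eq_some hhead]

theorem IsDiPath.reflTransGen_right (hp : IsDiPath E u v p) (hx : x ∈ p) : ReflTransGen E x v := by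
  obtain ⟨hchain, -, -, hlast⟩ := hp
  refine List.IsChain.backwards_induction (ReflTransGen E · v) p hchain (fun _ _ hE h ↦ h.head hE)
    (fun hne ↦ ?_) x hx
  rw [List.getLast_of_getLast?_eq_some hlast]

theorem exists_isChain_mem_of_reflTransGen (hux : ReflTransGen E u x) (hxv : ReflTransGen E x v) :
    ∃ l : List V, (u :: l).IsChain E ∧ (u :: l).getLast? = some v ∧ x ∈ u :: l := by
  induction hux using ReflTransGen.head_induction_on with
  | refl =>
    obtain ⟨l, hchain, hlast⟩ := List.exists_isChain_cons_of_relationReflTransGen hxv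
    exact ⟨l, hchain, List.getLast?_eq_some_getLast _ ▸ congrArg some hlast, List.mem_cons_self⟩
  | @head a b hab _ ih =>
    obtain ⟨l, hchain, hlast, hx⟩ := ih
    exact ⟨b :: l, hchain.cons_cons hab, by rwa [List.getLast?_cons_cons],
      List.mem_cons_of_mem a hx⟩

theorem nodup_of_isChain_of_acyclic (hE : ∀ a, ¬ TransGen E a a) (hp : p.IsChain E) : p.Nodup := by
  have hpairwise : p.Pairwise (TransGen E) := (hp.imp fun _ _ ↦ TransGen.single).pairwise
  refine hpairwise.imp ?_
  rintro a _ haa rfl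
  exact hE a haa

theorem mem_allPaths_iff_of_acyclic (hE : ∀ a, ¬ TransGen E a a) :
    x ∈ allPaths E u v ↔ ReflTransGen E u x ∧ ReflTransGen E x v := by
  constructor
  · rintro ⟨p, hp, hx⟩
    exact ⟨hp.reflTransGen_left hx, hp.reflTransGen_right hx⟩
  · rintro ⟨hux, hxv⟩
    obtain ⟨l, hchain, hlast, hx⟩ := exists_isChain_mem_of_reflTransGen hux hxv
    exact ⟨u :: l, ⟨hchain, nodup_of_isChain_of_acyclic hE hchain, rfl, hlast⟩, hx⟩

end Digraph

section Preorder

variable {V : Type*} [Preorder V] {v : V}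

theorem not_transGen_covBy_self (a : V) : ¬ TransGen (· ⋖ ·) a a := by
  intro h
  have hlt : TransGen (· < ·) a a := TransGen.mono (fun _ _ ↦ CovBy.lt) a a h
  rw [transGen_eq_self] at hlt
  exact lt_irrefl a hlt

theorem isCodirectedOrder_of_Icc_eq_empty
    (hr : ∀ u v : V, Set.Icc u v = ∅ → Set.Icc v u = ∅ →
      ∃ w, Set.Icc w u ≠ ∅ ∧ Set.Icc w v ≠ ∅) : IsCodirectedOrder V where
  directed u v := by
    simp only [ne_eq, Set.Icc_eq_empty_iff, not_not] at hr
    by_cases huv : u ≤ v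
    · exact ⟨u, le_rfl, huv⟩
    by_cases hvu : v ≤ u
    · exact ⟨v, hvu, le_rfl⟩
    exact hr u v huv hvu

theorem isChain_Iic_of_Icc_union_Icc_eq [IsCodirectedOrder V]
    (hunion : ∀ u v w : V, w ∈ Set.Icc u v → Set.Icc u w ∪ Set.Icc w v = Set.Icc u v) (v : V) :
    IsChain (· ≤ ·) (Set.Iic v) := by
  intro x hx y hy _
  obtain ⟨z, hzx, hzy⟩ := exists_le_le x y
  have hy_mem : y ∈ Set.Icc z x ∪ Set.Icc x v := hunion z v x ⟨hzx, hx⟩ ▸ ⟨hzy, hy⟩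
  exact hy_mem.symm.imp And.left And.right

theorem exists_isBot_of_finite_Iic [IsCodirectedOrder V] (hv : (Set.Iic v).Finite) :
    ∃ w : V, IsBot w := by
  obtain ⟨w, -, hw⟩ := hv.exists_le_minimal (Set.mem_Iic.2 le_rfl)
  exact ⟨w, IsMin.isBot fun x hx ↦ hw.2 (hx.trans hw.1) hx⟩

end Preorder

section PartialOrder

variable {V : Type*} [PartialOrder V] {v x y : V}

theorem underlyingEdge_Icc : underlyingEdge (Set.Icc : V → V → Set V) = (· ⋖ ·) := by
  ext x y
  refine ⟨fun ⟨hne, hIcc⟩ ↦ ?_, fun h ↦ ⟨h.ne, h.Icc_eq⟩⟩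
  have hle : x ≤ y := Set.nonempty_Icc.1 (hIcc ▸ Set.insert_nonempty x {y})
  refine ⟨hle.lt_of_ne hne, fun z hxz hzy ↦ ?_⟩
  have hz : z ∈ ({x, y} : Set V) := hIcc ▸ ⟨hxz.le, hzy.le⟩
  exact hz.elim hxz.ne' hzy.ne

theorem allPaths_covBy [LocallyFiniteOrder V] (u v : V) :
    allPaths (· ⋖ ·) u v = Set.Icc u v := by
  ext x
  rw [mem_allPaths_iff_of_acyclic not_transGen_covBy_self, ← le_iff_reflTransGen_covBy,
    ← le_iff_reflTransGen_covBy, Set.mem_Icc]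

theorem eq_of_covBy_of_covBy_of_isChain_Iic (hv : IsChain (· ≤ ·) (Set.Iic v)) (hx : x ⋖ v)
    (hy : y ⋖ v) : x = y := by
  rcases hv.total hx.le hy.le with hxy | hyx
  · exact (hx.eq_or_eq hxy hy.le).elim Eq.symm fun h ↦ (hy.ne h).elim
  · exact (hy.eq_or_eq hyx hx.le).elim id fun h ↦ (hx.ne h).elim

theorem isRootedDirectedTree_covBy [LocallyFiniteOrder V] {w : V} (hw : IsBot w)
    (hchain : ∀ v : V, IsChain (· ≤ ·) (Set.Iic v)) :
    IsRootedDirectedTree ((· ⋖ ·) : V → V → Prop) where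
  acyclic u v p hp hvu :=
    not_transGen_covBy_self u
      (.tail' (hp.reflTransGen_right (List.mem_of_mem_head? hp.2.2.1)) hvu)
  eq_of_edge_of_edge v _ _ := eq_of_covBy_of_covBy_of_isChain_Iic (hchain v)
  exists_root := ⟨w, fun v _ ↦ by
    have hmem : w ∈ allPaths (· ⋖ ·) w v := allPaths_covBy w v ▸ Set.left_mem_Icc.2 (hw v)
    exact hmem.imp fun _ ↦ And.left⟩

end PartialOrder

section PosetFunction

variable {V : Type*} {R : V → V → Set V}

/-- Poset functions: the set functions satisfying the axioms (t0), (t1), (t3), (t2a), (tr1) and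
(tr2), with field names as in the paper. They abstract the interval functions `Set.Icc` of partial
orders; `R u v ≠ ∅` encodes `u ≤ v`. -/
structure IsPosetFunction (R : V → V → Set V) : Prop where
  t0 : ∀ u v w, R u w ≠ ∅ → R w v ≠ ∅ → R u v ≠ ∅
  t1 : ∀ u v, R u v ≠ ∅ → u ∈ R u v ∧ v ∈ R u v
  t3 : ∀ u, R u u = {u}
  t2a : ∀ u v, R u v ≠ ∅ → u ≠ v → R v u = ∅
  tr1 : ∀ u v w, u ≠ v → R u w ≠ ∅ → R w v ≠ ∅ → R u w ∪ R w v ⊆ R u v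
  tr2 : ∀ u v w, u ≠ v → (R u w = ∅ ∨ R w v = ∅) → w ∉ R u v

namespace IsPosetFunction

theorem mem_iff (hR : IsPosetFunction R) {u v x : V} : x ∈ R u v ↔ R u x ≠ ∅ ∧ R x v ≠ ∅ := by
  obtain rfl | huv := eq_or_ne u v
  · rw [hR.t3, Set.mem_singleton_iff]
    refine ⟨?_, fun ⟨hux, hxu⟩ ↦ by_contra fun hne ↦ hux (hR.t2a x u hxu hne)⟩
    rintro rfl
    simp [hR.t3]
  · exact ⟨fun hx ↦ ⟨fun h ↦ hR.tr2 u v x huv (.inl h) hx, fun h ↦ hR.tr2 u v x huv (.inr h) hx⟩,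
      fun ⟨hux, hxv⟩ ↦ hR.tr1 u v x huv hux hxv (.inl (hR.t1 u x hux).2)⟩

theorem exists_partialOrder_eq_Icc (hR : IsPosetFunction R) :
    ∃ _ : PartialOrder V, R = Set.Icc :=
  ⟨{ le := fun u v ↦ R u v ≠ ∅
     le_refl := fun u ↦ by simp [hR.t3]
     le_trans := fun u w v ↦ hR.t0 u v w
     le_antisymm := fun u v huv hvu ↦ by_contra fun hne ↦ hvu (hR.t2a u v huv hne) },
    funext₂ fun _ _ ↦ Set.ext fun _ ↦ hR.mem_iff⟩

end IsPosetFunction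

theorem stmt_13_general [Nonempty V] (hR : IsPosetFunction R)
    (hp : ∀ u v w, w ∈ R u v → R u w ∪ R w v = R u v)
    (hr : ∀ u v, R u v = ∅ → R v u = ∅ → ∃ w, R w u ≠ ∅ ∧ R w v ≠ ∅)
    (hfin : ∀ v, {u | R u v ≠ ∅}.Finite) :
    IsRootedDirectedTree (underlyingEdge R) ∧
      ∀ u v, R u v = allPaths (underlyingEdge R) u v := by
  obtain ⟨_, rfl⟩ := hR.exists_partialOrder_eq_Icc
  have : IsCodirectedOrder V := isCodirectedOrder_of_Icc_eq_empty hr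
  have hIic (v : V) : (Set.Iic v).Finite := by
    simpa only [ne_eq, Set.Icc_eq_empty_iff, not_not] using! hfin v
  let : LocallyFiniteOrder V :=
    .ofFiniteIcc fun _ v ↦ (hIic v).subset Set.Icc_subset_Iic_self
  obtain ⟨w, hw⟩ := exists_isBot_of_finite_Iic (hIic (Classical.arbitrary V))
  rw [underlyingEdge_Icc]
  exact ⟨isRootedDirectedTree_covBy hw (isChain_Iic_of_Icc_union_Icc_eq hp),
    fun u v ↦ (allPaths_covBy u v).symm⟩

end PosetFunction

/-- Let `R` be a poset function on a nonempty finite set satisfying (r)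
and (p). Then the underlying digraph `G_R` is a rooted directed tree: it is acyclic,
every vertex has at most one incoming edge, and there is a root vertex `w` with a
directed path from `w` to every other vertex. Moreover `R` equals the all-paths transit
function of `G_R`. -/
theorem stmt_13 {V : Type*} [Fintype V] [Nonempty V]
    (R : V → V → Set V)
    -- (t0)
    (t0 : ∀ u v w, R u w ≠ ∅ → R w v ≠ ∅ → R u v ≠ ∅)
    -- (t1)
    (t1 : ∀ u v, R u v ≠ ∅ → u ∈ R u v ∧ v ∈ R u v)
    -- (t3)
    (t3 : ∀ u, R u u = {u})
    -- (t2a)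
    (t2a : ∀ u v, R u v ≠ ∅ → u ≠ v → R v u = ∅)
    -- (tr1)
    (tr1 : ∀ u v w, u ≠ v → R u w ≠ ∅ → R w v ≠ ∅ → R u w ∪ R w v ⊆ R u v)
    -- (tr2)
    (tr2 : ∀ u v w, u ≠ v → (R u w = ∅ ∨ R w v = ∅) → w ∉ R u v)
    -- (p)
    (axp : ∀ u v w, w ∈ R u v → R u w ∪ R w v = R u v)
    -- (r)
    (axr : ∀ u v, R u v = ∅ → R v u = ∅ → ∃ w, R w u ≠ ∅ ∧ R w v ≠ ∅) :
    -- G_R is acyclic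
    (∀ (u v : V) (p : List V),
        IsDiPath (underlyingEdge R) u v p → ¬ underlyingEdge R v u) ∧
    -- every vertex of G_R has in-degree at most one
    (∀ v x y : V, underlyingEdge R x v → underlyingEdge R y v → x = y) ∧
    -- G_R has a root: a vertex with a directed path to every other vertex
    (∃ w : V, ∀ v : V, v ≠ w → ∃ p : List V, IsDiPath (underlyingEdge R) w v p) ∧
    -- R = A_{G_R}
    (∀ u v, R u v = allPaths (underlyingEdge R) u v) := by
  obtain ⟨htree, hpaths⟩ := stmt_13_general ⟨t0, t1, t3, t2a, tr1, tr2⟩ axp axr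
    fun _ ↦ Set.toFinite _
  exact ⟨htree.acyclic, htree.eq_of_edge_of_edge, htree.exists_root, hpaths⟩
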